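/- arXiv:2605.18753 — 9 statements merged into one kernel-verified Lean document; each statement's English description precedes it below -/
import Mathlib

section
/- Let n ≥ 1, M ≥ 0, and z : Fin n → ℝ with |z i| ≤ M for all i. Then the Shannon entropy of softmax(z) satisfies H(softmax(z)) ≥ Real.log n − 2*M. (Consequently every entry of softmax(z) is at least exp(−2M)/n.) -/
/-!
The partition function `S = ∑ j, exp (z j)` lies between `n * exp (-M)` and `n * exp M`, so every
softmax entry lies between `exp (-2M) / n` and `exp (2M) / n`. The upper bound gives
`-log (sm i) ≥ log n - 2M` pointwise, and the entropy is the average of `-log (sm i)` with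
weights `sm i` summing to one.
-/

open Finset

/-- For bounded logits `|z i| ≤ M`, the entropy of `softmax z` is at least
`log n - 2M`, and every entry of `softmax z` is at least `exp (-2M) / n`. -/
theorem softmax_entropy_ge_of_bounded (n : ℕ) (hn : 1 ≤ n) (M : ℝ) (hM : 0 ≤ M)
    (z : Fin n → ℝ) (hz : ∀ i, |z i| ≤ M)
    (sm : Fin n → ℝ) (hsm : ∀ i, sm i = Real.exp (z i) / ∑ j, Real.exp (z j)) :
    (Real.log n - 2 * M ≤ ∑ i, -(sm i * Real.log (sm i))) ∧
    (∀ i, Real.exp (-(2 * M)) / n ≤ sm i) := by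
  have hn0 : (0 : ℝ) < n := by exact_mod_cast hn
  have hlo : (n : ℝ) * Real.exp (-M) ≤ ∑ j, Real.exp (z j) := by
    have h := Finset.card_nsmul_le_sum Finset.univ (fun j => Real.exp (z j)) (Real.exp (-M))
      (fun j _ => Real.exp_le_exp.mpr (abs_le.mp (hz j)).1)
    simpa using h
  have hhi : ∑ j, Real.exp (z j) ≤ (n : ℝ) * Real.exp M := by
    have h := Finset.sum_le_card_nsmul Finset.univ (fun j => Real.exp (z j)) (Real.exp M)
      (fun j _ => Real.exp_le_exp.mpr (abs_le.mp (hz j)).2)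
    simpa using h
  have hS : 0 < ∑ j, Real.exp (z j) :=
    lt_of_lt_of_le (mul_pos hn0 (Real.exp_pos _)) hlo
  have hpos : ∀ i, 0 < sm i := fun i => by
    rw [hsm i]; exact div_pos (Real.exp_pos _) hS
  have hsum : ∑ i, sm i = 1 := by
    simp_rw [hsm]
    rw [← Finset.sum_div, div_self hS.ne']
  have hlog : ∀ i, Real.log (sm i) ≤ 2 * M - Real.log n := fun i => by
    have h := Real.log_le_log (mul_pos hn0 (Real.exp_pos _)) hlo
    rw [Real.log_mul hn0.ne' (Real.exp_pos _).ne', Real.log_exp] at h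
    rw [hsm i, Real.log_div (Real.exp_pos _).ne' hS.ne', Real.log_exp]
    linarith [(abs_le.mp (hz i)).2]
  refine ⟨?_, fun i => ?_⟩
  · calc Real.log n - 2 * M = ∑ i, sm i * (Real.log n - 2 * M) := by
          rw [← Finset.sum_mul, hsum, one_mul]
      _ ≤ ∑ i, -(sm i * Real.log (sm i)) := by
          refine Finset.sum_le_sum fun i _ => ?_
          rw [← mul_neg]
          exact mul_le_mul_of_nonneg_left (by linarith [hlog i]) (hpos i).le
  · rw [hsm i, div_le_div_iff₀ hn0 hS]
    calc Real.exp (-(2 * M)) * ∑ j, Real.exp (z j)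
        ≤ Real.exp (-(2 * M)) * (n * Real.exp M) :=
          mul_le_mul_of_nonneg_left hhi (Real.exp_pos _).le
      _ = Real.exp (-M) * n := by
          rw [mul_left_comm, ← Real.exp_add, mul_comm]
          ring_nf
      _ ≤ Real.exp (z i) * n :=
          mul_le_mul_of_nonneg_right (Real.exp_le_exp.mpr (abs_le.mp (hz i)).1) hn0.le
end

section
/- Let M ≥ 0 and for each n ≥ 1 let z_n : Fin n → ℝ satisfy |z_n i| ≤ M for all i. Then H(softmax(z_n)) / Real.log n tends to 1 as n → ∞; i.e., softmax applied to any uniformly bounded family of logit vectors is dispersive. -/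
open Finset Filter

/-!
If every logit lies in `[-M, M]`, the normalizer `S = ∑ j, exp (z j)` lies between `n * exp (-M)`
and `n * exp M`. Hence each surprisal `-log (softmax z i) = log S - z i` is within `2 * M` of
`log n`, and so is the entropy, which is their average (`abs_entropy_softmax_sub_log_le`).
Dividing by `log n → ∞` gives the limit.
-/

lemma abs_log_sum_exp_sub_log_le {M : ℝ} {n : ℕ} (hn : 1 ≤ n) (z : Fin n → ℝ)
    (hz : ∀ i, |z i| ≤ M) :
    |Real.log (∑ j, Real.exp (z j)) - Real.log n| ≤ M := by
  have hn0 : (0 : ℝ) < n := by exact_mod_cast hn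
  have hlo : (n : ℝ) * Real.exp (-M) ≤ ∑ j, Real.exp (z j) := by
    have h := Finset.card_nsmul_le_sum univ (fun j => Real.exp (z j)) (Real.exp (-M))
      (fun i _ => Real.exp_le_exp.mpr (abs_le.mp (hz i)).1)
    simpa using h
  have hhi : ∑ j, Real.exp (z j) ≤ (n : ℝ) * Real.exp M := by
    have h := Finset.sum_le_card_nsmul univ (fun j => Real.exp (z j)) (Real.exp M)
      (fun i _ => Real.exp_le_exp.mpr (abs_le.mp (hz i)).2)
    simpa using h
  have hpos : 0 < (n : ℝ) * Real.exp (-M) := by positivity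
  have h1 := Real.log_le_log hpos hlo
  have h2 := Real.log_le_log (hpos.trans_le hlo) hhi
  rw [Real.log_mul hn0.ne' (Real.exp_pos _).ne', Real.log_exp] at h1 h2
  rw [abs_le]
  constructor <;> linarith

lemma abs_entropy_softmax_sub_log_le {M : ℝ} {n : ℕ} (hn : 1 ≤ n) (z p : Fin n → ℝ)
    (hz : ∀ i, |z i| ≤ M) (hp : ∀ i, p i = Real.exp (z i) / ∑ j, Real.exp (z j)) :
    |(∑ i, -(p i * Real.log (p i))) - Real.log n| ≤ 2 * M := by
  have hS : 0 < ∑ j, Real.exp (z j) :=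
    Finset.sum_pos (fun i _ => Real.exp_pos _) ⟨⟨0, hn⟩, Finset.mem_univ _⟩
  have hp0 : ∀ i, 0 ≤ p i := fun i => by rw [hp]; positivity
  have hp1 : ∑ i, p i = 1 := by
    simp_rw [hp]
    rw [← Finset.sum_div, div_self hS.ne']
  have hlog : ∀ i, |-Real.log (p i) - Real.log n| ≤ 2 * M := fun i => by
    rw [hp, Real.log_div (Real.exp_pos _).ne' hS.ne', Real.log_exp]
    have h1 := abs_le.mp (abs_log_sum_exp_sub_log_le hn z hz)
    have h2 := abs_le.mp (hz i)
    rw [abs_le]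
    constructor <;> linarith [h1.1, h1.2, h2.1, h2.2]
  have hsum : (∑ i, -(p i * Real.log (p i))) - Real.log n
      = ∑ i, p i * (-Real.log (p i) - Real.log n) := by
    simp_rw [mul_sub, Finset.sum_sub_distrib, ← Finset.sum_mul, hp1, one_mul, mul_neg]
  calc |(∑ i, -(p i * Real.log (p i))) - Real.log n|
      ≤ ∑ i, |p i * (-Real.log (p i) - Real.log n)| := by
        rw [hsum]; exact Finset.abs_sum_le_sum_abs _ _
    _ ≤ ∑ i, p i * (2 * M) := Finset.sum_le_sum fun i _ => by
        rw [abs_mul, abs_of_nonneg (hp0 i)]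
        exact mul_le_mul_of_nonneg_left (hlog i) (hp0 i)
    _ = 2 * M := by rw [← Finset.sum_mul, hp1, one_mul]

/-- Softmax applied to a uniformly bounded family of logit vectors is dispersive:
`H(softmax z_n) / log n → 1`. -/
theorem softmax_dispersive (M : ℝ) (hM : 0 ≤ M)
    (z : (n : ℕ) → Fin n → ℝ)
    (hz : ∀ n, 1 ≤ n → ∀ i, |z n i| ≤ M)
    (sm : (n : ℕ) → Fin n → ℝ)
    (hsm : ∀ n i, sm n i = Real.exp (z n i) / ∑ j, Real.exp (z n j)) :
    Filter.Tendsto (fun n : ℕ =>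
        (∑ i, -(sm n i * Real.log (sm n i))) / Real.log n)
      Filter.atTop (nhds 1) := by
  have hlim : Tendsto (fun n : ℕ => 2 * M / Real.log n) atTop (nhds 0) :=
    (Real.tendsto_log_atTop.comp tendsto_natCast_atTop_atTop).const_div_atTop (2 * M)
  rw [tendsto_iff_norm_sub_tendsto_zero]
  refine squeeze_zero' (Eventually.of_forall fun n => norm_nonneg _) ?_ hlim
  filter_upwards [eventually_ge_atTop 2] with n hn
  have hlog : 0 < Real.log n := Real.log_pos (by exact_mod_cast hn)
  have hn1 : 1 ≤ n := by omega
  rw [Real.norm_eq_abs, div_sub_one hlog.ne', abs_div, abs_of_pos hlog]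
  exact div_le_div_of_nonneg_right
    (abs_entropy_softmax_sub_log_le hn1 (z n) (sm n) (hz n hn1) (hsm n)) hlog.le
end

section
/- Let H ≥ 1, let θ : Fin H → ℝ with θ h ≥ 0 for all h and ∑ h, θ h = 1, let M ≥ 0, and for each n ≥ 1 and each h let z_n^(h) : Fin n → ℝ satisfy |z_n^(h) i| ≤ M for all i. Then the entropy of the softmax head aggregation satisfies H(∑_h θ h • softmax(z_n^(h))) / Real.log n → 1 as n → ∞; i.e., softmax head aggregation is dispersive. -/
open Finset Filter

/-!
Logits in `[-M, M]` force every softmax coordinate, hence every convex combination of such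
coordinates, into `[exp (-2M) / n, exp (2M) / n]`. So `-log (q i)` differs from `log n` by at most
`2M` for every `i`; averaging against `q` (whose sum is `1`), the entropy also differs from `log n`
by at most `2M`, and dividing by `log n → ∞` gives the limit `1`.
-/

/-- Bounded logits give softmax coordinates comparable to the uniform weight `1 / n`. -/
lemma softmax_mem_bounds {n : ℕ} {M : ℝ} {w : Fin n → ℝ} (hn : 1 ≤ n)
    (hw : ∀ i, |w i| ≤ M) (i : Fin n) :
    Real.exp (-(2 * M)) / n ≤ Real.exp (w i) / ∑ j, Real.exp (w j) ∧
      Real.exp (w i) / ∑ j, Real.exp (w j) ≤ Real.exp (2 * M) / n := by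
  have hn0 : (0 : ℝ) < n := by exact_mod_cast hn
  have hlow : (n : ℝ) * Real.exp (-M) ≤ ∑ j, Real.exp (w j) := by
    have := Finset.card_nsmul_le_sum Finset.univ (fun j => Real.exp (w j)) (Real.exp (-M))
      (fun j _ => Real.exp_le_exp.2 (abs_le.1 (hw j)).1)
    simpa using this
  have hupp : ∑ j, Real.exp (w j) ≤ (n : ℝ) * Real.exp M := by
    have := Finset.sum_le_card_nsmul Finset.univ (fun j => Real.exp (w j)) (Real.exp M)
      (fun j _ => Real.exp_le_exp.2 (abs_le.1 (hw j)).2)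
    simpa using this
  have hS : 0 < ∑ j, Real.exp (w j) := lt_of_lt_of_le (by positivity) hlow
  constructor
  · rw [div_le_div_iff₀ hn0 hS]
    calc Real.exp (-(2 * M)) * ∑ j, Real.exp (w j)
        ≤ Real.exp (-(2 * M)) * (n * Real.exp M) := by gcongr
      _ = Real.exp (-M) * n := by
          rw [mul_left_comm, ← Real.exp_add, mul_comm]; ring_nf
      _ ≤ Real.exp (w i) * n := by
          gcongr; exact (abs_le.1 (hw i)).1
  · rw [div_le_div_iff₀ hS hn0]
    calc Real.exp (w i) * n ≤ Real.exp M * n := by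
          gcongr; exact (abs_le.1 (hw i)).2
      _ = Real.exp (2 * M) * (n * Real.exp (-M)) := by
          rw [mul_left_comm, ← Real.exp_add, mul_comm]; ring_nf
      _ ≤ Real.exp (2 * M) * ∑ j, Real.exp (w j) := by gcongr

/-- A probability vector within a factor `exp C` of uniform has entropy within `C` of `log n`. -/
lemma abs_entropy_sub_log_le {n : ℕ} {C : ℝ} {p : Fin n → ℝ} (hn : 1 ≤ n)
    (hsum : ∑ i, p i = 1)
    (hp : ∀ i, Real.exp (-C) / n ≤ p i ∧ p i ≤ Real.exp C / n) :
    |(∑ i, -(p i * Real.log (p i))) - Real.log n| ≤ C := by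
  have hn0 : (0 : ℝ) < n := by exact_mod_cast hn
  have hpos : ∀ i, 0 < p i := fun i => lt_of_lt_of_le (by positivity) (hp i).1
  have hlog : ∀ i, |-Real.log (p i) - Real.log n| ≤ C := by
    intro i
    have h1 := Real.log_le_log (by positivity) (hp i).1
    have h2 := Real.log_le_log (hpos i) (hp i).2
    rw [Real.log_div (Real.exp_ne_zero _) hn0.ne', Real.log_exp] at h1 h2
    rw [abs_le]
    constructor <;> linarith
  have heq : (∑ i, -(p i * Real.log (p i))) - Real.log n
      = ∑ i, p i * (-Real.log (p i) - Real.log n) := by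
    simp_rw [mul_sub, Finset.sum_sub_distrib, ← Finset.sum_mul, hsum, one_mul, mul_neg]
  rw [heq]
  calc |∑ i, p i * (-Real.log (p i) - Real.log n)|
      ≤ ∑ i, |p i * (-Real.log (p i) - Real.log n)| := Finset.abs_sum_le_sum_abs _ _
    _ ≤ ∑ i, p i * C := by
        refine Finset.sum_le_sum fun i _ => ?_
        rw [abs_mul, abs_of_pos (hpos i)]
        exact mul_le_mul_of_nonneg_left (hlog i) (hpos i).le
    _ = C := by rw [← Finset.sum_mul, hsum, one_mul]

/-- Softmax head aggregation is dispersive: for uniformly bounded logits, the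
entropy of the aggregated distribution satisfies `H(q_n) / log n → 1`. -/
theorem softmax_head_aggregation_dispersive (H : ℕ) (hH : 1 ≤ H)
    (θ : Fin H → ℝ) (hθ0 : ∀ h, 0 ≤ θ h) (hθ1 : ∑ h, θ h = 1)
    (M : ℝ) (hM : 0 ≤ M)
    (z : (n : ℕ) → Fin H → Fin n → ℝ)
    (hz : ∀ n, 1 ≤ n → ∀ h i, |z n h i| ≤ M)
    (q : (n : ℕ) → Fin n → ℝ)
    (hq : ∀ n i, q n i =
      ∑ h, θ h * (Real.exp (z n h i) / ∑ j, Real.exp (z n h j))) :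
    Filter.Tendsto (fun n : ℕ =>
        (∑ i, -(q n i * Real.log (q n i))) / Real.log n)
      Filter.atTop (nhds 1) := by
  have hlogtop : Tendsto (fun n : ℕ => Real.log n) atTop atTop :=
    Real.tendsto_log_atTop.comp tendsto_natCast_atTop_atTop
  have hbound : ∀ n : ℕ, 1 ≤ n →
      |(∑ i, -(q n i * Real.log (q n i))) - Real.log n| ≤ 2 * M := by
    intro n hn
    refine abs_entropy_sub_log_le hn ?_ fun i => ?_
    · simp_rw [hq]
      rw [Finset.sum_comm, ← hθ1]
      refine Finset.sum_congr rfl fun h _ => ?_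
      have : Nonempty (Fin n) := ⟨⟨0, hn⟩⟩
      have hS : 0 < ∑ j, Real.exp (z n h j) :=
        Finset.sum_pos (fun j _ => Real.exp_pos _) Finset.univ_nonempty
      rw [← Finset.mul_sum, ← Finset.sum_div, div_self hS.ne', mul_one]
    · have hb := fun h => softmax_mem_bounds hn (hz n hn h) i
      rw [hq]
      constructor
      · rw [← one_mul (_ / (n : ℝ)), ← hθ1, Finset.sum_mul]
        exact Finset.sum_le_sum fun h _ => mul_le_mul_of_nonneg_left (hb h).1 (hθ0 h)
      · rw [← one_mul (Real.exp (2 * M) / (n : ℝ)), ← hθ1, Finset.sum_mul]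
        exact Finset.sum_le_sum fun h _ => mul_le_mul_of_nonneg_left (hb h).2 (hθ0 h)
  rw [tendsto_iff_dist_tendsto_zero]
  refine squeeze_zero' (Eventually.of_forall fun _ => dist_nonneg) ?_
    (hlogtop.const_div_atTop (2 * M))
  filter_upwards [eventually_ge_atTop 1, hlogtop.eventually_gt_atTop 0] with n hn hpos
  rw [Real.dist_eq, div_sub_one hpos.ne', abs_div, abs_of_pos hpos]
  exact div_le_div_of_nonneg_right (hbound n hn) hpos.le
end

section
/- (Proposition 1.) In the routed/diagonal setup, define g_j = λ * w'_j for j ∈ R, g_j = (1 − λ)/|D| for j ∈ D, and g_j = 0 otherwise. Define μ = (1/|R|) * ∑_{j∈R} Real.log (w (c j)), and d_j = (Real.log (w (c j)) − μ)/σ for j ∈ R, d_j = 0 for j ∈ D. Then for every z : R ∪ D → ℝ and every v : R ∪ D → ℝ^m, the prior-weighted softmax average equals the bias-form softmax average: (∑_{j ∈ R∪D} g_j * Real.exp (z j) • v j) / (∑_{t ∈ R∪D} g_t * Real.exp (z t)) = (∑_{j ∈ R∪D} Real.exp (z j + d_j) • v j) / (∑_{t ∈ R∪D} Real.exp (z t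 + d_t)). -/
/-!
Both sides are averages with weights `g j * exp (z j)` and `exp (z j + d j)`, so it suffices that
`g = K * exp d` on `R ∪ D` for one nonzero constant `K`. With `Z` the normalizer of `w'`, the
divergence is `log Z - μ / σ - log |R|`, so the argument of the sigmoid is
`log Z - μ / σ - log |D|`. This is exactly the log-odds of `lam` for which
`lam * w' j = (1 - lam) / |D| * exp (d j)` on `R`; hence `K = (1 - lam) / |D|`.
-/

open Finset

/-- Normalized weighted averages do not change when all weights are multiplied by `K ≠ 0`. -/
lemma weighted_average_scale {ι E : Type*} [AddCommGroup E] [Module ℝ E] (s : Finset ι)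
    (a b : ι → ℝ) (v : ι → E) (K : ℝ) (hK : K ≠ 0) (h : ∀ j ∈ s, a j = K * b j) :
    (∑ t ∈ s, a t)⁻¹ • (∑ j ∈ s, a j • v j) = (∑ t ∈ s, b t)⁻¹ • (∑ j ∈ s, b j • v j) := by
  have h1 : ∑ t ∈ s, a t = K * ∑ t ∈ s, b t := by
    rw [Finset.mul_sum]; exact Finset.sum_congr rfl h
  have h2 : ∑ j ∈ s, a j • v j = K • ∑ j ∈ s, b j • v j := by
    rw [Finset.smul_sum]
    exact Finset.sum_congr rfl fun j hj => by rw [h j hj, mul_smul]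
  rw [h1, h2, smul_smul, mul_inv, mul_right_comm, inv_mul_cancel₀ hK, one_mul]

/-- Proposition 1: the prior-weighted softmax average equals the bias-form
softmax average, with bias `d_j = (log w(c j) - μ)/σ` on `R` and `0` on `D`. -/
theorem prior_softmax_eq_bias_form {ι κ : Type*} [DecidableEq ι] [DecidableEq κ]
    (R D : Finset ι) (S : Finset κ)
    (hRD : Disjoint R D) (hR : R.Nonempty) (hD : D.Nonempty) (hS : S.Nonempty)
    (c : ι → κ) (hc : ∀ j ∈ R, c j ∈ S)
    (w : κ → ℝ) (hw : ∀ s ∈ S, 0 < w s)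
    (σ : ℝ) (hσ : 0 < σ) (B : ℕ) (hB : 1 ≤ B)
    (m : ℕ) (z : ι → ℝ) (v : ι → (Fin m → ℝ)) :
    let w' : ι → ℝ :=
      fun j => (w (c j)) ^ (1 / σ) / ((B : ℝ) * ∑ s ∈ S, (w s) ^ (1 / σ))
    let KL : ℝ := ∑ j ∈ R, (1 / (R.card : ℝ)) * Real.log ((1 / (R.card : ℝ)) / w' j)
    let lam : ℝ := 1 / (1 + Real.exp (-(KL + Real.log ((R.card : ℝ) / (D.card : ℝ)))))
    let g : ι → ℝ :=
      fun j => if j ∈ R then lam * w' j else if j ∈ D then (1 - lam) / (D.card : ℝ) else 0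
    let μ : ℝ := (1 / (R.card : ℝ)) * ∑ j ∈ R, Real.log (w (c j))
    let d : ι → ℝ := fun j => if j ∈ R then (Real.log (w (c j)) - μ) / σ else 0
    (∑ t ∈ R ∪ D, g t * Real.exp (z t))⁻¹ • (∑ j ∈ R ∪ D, (g j * Real.exp (z j)) • v j) =
      (∑ t ∈ R ∪ D, Real.exp (z t + d t))⁻¹ • (∑ j ∈ R ∪ D, Real.exp (z j + d j) • v j) := by
  intro w' KL lam g μ d
  have hr : (0 : ℝ) < R.card := by exact_mod_cast hR.card_pos
  have hd : (0 : ℝ) < D.card := by exact_mod_cast hD.card_pos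
  have hwR : ∀ j ∈ R, 0 < w (c j) := fun j hj => hw _ (hc j hj)
  obtain ⟨Z, hZdef⟩ : ∃ Z : ℝ, Z = (B : ℝ) * ∑ s ∈ S, (w s) ^ (1 / σ) := ⟨_, rfl⟩
  have hZ : 0 < Z := by
    rw [hZdef]
    have hB' : (0 : ℝ) < B := by exact_mod_cast hB
    exact mul_pos hB' (Finset.sum_pos (fun s hs => Real.rpow_pos_of_pos (hw s hs) _) hS)
  have hw' : ∀ j ∈ R, w' j = Real.exp (Real.log (w (c j)) / σ - Real.log Z) := by
    intro j hj
    simp only [w']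
    rw [← hZdef, Real.rpow_def_of_pos (hwR j hj), Real.exp_sub, Real.exp_log hZ, mul_one_div]
  have hKL : KL = Real.log Z - μ / σ - Real.log R.card := by
    have hterm : ∀ j ∈ R, (1 / (R.card : ℝ)) * Real.log ((1 / (R.card : ℝ)) / w' j)
        = (1 / (R.card : ℝ)) * (Real.log Z - Real.log R.card)
          - (1 / (R.card : ℝ)) / σ * Real.log (w (c j)) := by
      intro j hj
      rw [hw' j hj, Real.log_div (by positivity) (Real.exp_ne_zero _), Real.log_exp, one_div,
        Real.log_inv]
      ring
    simp only [KL, μ]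
    rw [Finset.sum_congr rfl hterm, Finset.sum_sub_distrib, Finset.sum_const, nsmul_eq_mul,
      ← Finset.mul_sum]
    field_simp
    ring
  obtain ⟨E, hE⟩ : ∃ E : ℝ, E = Real.exp (-(KL + Real.log ((R.card : ℝ) / (D.card : ℝ)))) :=
    ⟨_, rfl⟩
  have hEpos : 0 < E := hE ▸ Real.exp_pos _
  have hlam : lam = 1 / (1 + E) := by rw [hE]
  have hE' : E = D.card * Real.exp (μ / σ - Real.log Z) := by
    rw [hE, hKL, Real.log_div hr.ne' hd.ne']
    conv_rhs => rw [← Real.exp_log hd, ← Real.exp_add]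
    congr 1
    ring
  have hlam1 : 1 - lam = E / (1 + E) := by
    rw [hlam]; field_simp; ring
  have hK : (1 - lam) / (D.card : ℝ) ≠ 0 := by
    rw [hlam1]; positivity
  refine weighted_average_scale (R ∪ D) _ _ v ((1 - lam) / (D.card : ℝ)) hK fun j hj => ?_
  by_cases hjR : j ∈ R
  · have hodds : E * Real.exp (d j) = D.card * w' j := by
      simp only [d, if_pos hjR]
      rw [hE', hw' j hjR, mul_assoc, ← Real.exp_add]
      congr 2
      ring
    have hg : g j = lam * w' j := if_pos hjR
    have hwj : w' j = E * Real.exp (d j) / D.card := by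
      rw [hodds]; field_simp
    rw [hg, hlam1, hlam, hwj, Real.exp_add]
    ring
  · have hjD : j ∈ D := (Finset.mem_union.mp hj).resolve_left hjR
    simp only [g, d, if_neg hjR, if_pos hjD, add_zero]
end

section
/- In the routed/diagonal setup, assume additionally that every chunk s ∈ S has exactly B preimages under c. Viewing λ as a function of σ, one has λ(σ) → |R| / (|R| + |D|) as σ → ∞. -/
/-!
Since every chunk has exactly `B` preimages, `|R| = B * |S|`. As `σ → ∞` each `(w s)^(1/σ)` tends
to `1`, so each `w'_j` tends to `1 / (B * |S|) = 1 / |R|`: the limit of `w'` is the uniform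
distribution on `R`, and the divergence tends to `0`. Continuity of the sigmoid then gives the limit
`sigmoid (log (|R| / |D|)) = |R| / (|R| + |D|)`.
-/

open Finset Filter

/-- As `σ → ∞`, the routed-mass weight `λ(σ)` tends to `|R| / (|R| + |D|)`. -/
theorem lambda_tendsto_ratio {ι κ : Type*} [DecidableEq ι] [DecidableEq κ]
    (R D : Finset ι) (S : Finset κ)
    (hRD : Disjoint R D) (hR : R.Nonempty) (hD : D.Nonempty) (hS : S.Nonempty)
    (c : ι → κ) (hc : ∀ j ∈ R, c j ∈ S)
    (w : κ → ℝ) (hw : ∀ s ∈ S, 0 < w s)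
    (B : ℕ) (hB : 1 ≤ B)
    (hfib : ∀ s ∈ S, (R.filter (fun j => c j = s)).card = B) :
    Filter.Tendsto
      (fun σ : ℝ =>
        1 / (1 + Real.exp (-((∑ j ∈ R, (1 / (R.card : ℝ)) *
              Real.log ((1 / (R.card : ℝ)) /
                ((w (c j)) ^ (1 / σ) / ((B : ℝ) * ∑ s ∈ S, (w s) ^ (1 / σ))))) +
            Real.log ((R.card : ℝ) / (D.card : ℝ))))))
      Filter.atTop (nhds ((R.card : ℝ) / ((R.card : ℝ) + (D.card : ℝ)))) := by
  have hRpos : (0 : ℝ) < R.card := by exact_mod_cast hR.card_pos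
  have hDpos : (0 : ℝ) < D.card := by exact_mod_cast hD.card_pos
  have hcard : (R.card : ℝ) = B * S.card := by
    have h := Finset.card_eq_sum_card_fiberwise (f := c) (s := R) (t := S) hc
    rw [Finset.sum_congr rfl hfib, Finset.sum_const, smul_eq_mul, mul_comm] at h
    exact_mod_cast h
  have hpow : ∀ s ∈ S, Tendsto (fun σ : ℝ => w s ^ (1 / σ)) atTop (nhds 1) := by
    intro s hs
    have h0 : Tendsto (fun σ : ℝ => 1 / σ) atTop (nhds 0) := by
      simpa only [one_div] using tendsto_inv_atTop_zero (𝕜 := ℝ)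
    simpa only [Real.rpow_zero] using
      (tendsto_const_nhds (x := w s)).rpow h0 (Or.inl (hw s hs).ne')
  have hden : Tendsto (fun σ : ℝ => (B : ℝ) * ∑ s ∈ S, w s ^ (1 / σ)) atTop
      (nhds (R.card : ℝ)) := by
    have h := (tendsto_finsetSum S hpow).const_mul (B : ℝ)
    simpa only [Finset.sum_const, nsmul_eq_mul, mul_one, ← hcard] using h
  have hKL : Tendsto (fun σ : ℝ => ∑ j ∈ R, (1 / (R.card : ℝ)) *
      Real.log ((1 / (R.card : ℝ)) /
        ((w (c j)) ^ (1 / σ) / ((B : ℝ) * ∑ s ∈ S, (w s) ^ (1 / σ))))) atTop (nhds 0) := by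
    rw [← Finset.sum_const_zero (s := R)]
    refine tendsto_finsetSum R fun j hj => ?_
    have hq : (1 / (R.card : ℝ)) ≠ 0 := (one_div_pos.mpr hRpos).ne'
    have hratio := (tendsto_const_nhds (x := 1 / (R.card : ℝ))).div
      ((hpow (c j) (hc j hj)).div hden hRpos.ne') hq
    rw [div_self hq] at hratio
    simpa only [Real.log_one, mul_zero, Pi.div_apply] using
      (hratio.log one_ne_zero).const_mul (1 / (R.card : ℝ))
  have hlim := ((Real.continuous_exp.tendsto _).comp
    (hKL.add_const (Real.log ((R.card : ℝ) / (D.card : ℝ)))).neg).const_add 1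
  -- The sigmoid at the limiting argument `log (|R| / |D|)` is `|R| / (|R| + |D|)`.
  have hval : 1 / (1 + Real.exp (-(0 + Real.log ((R.card : ℝ) / (D.card : ℝ))))) =
      (R.card : ℝ) / ((R.card : ℝ) + (D.card : ℝ)) := by
    rw [zero_add, Real.exp_neg, Real.exp_log (div_pos hRpos hDpos)]
    field_simp
  rw [← hval]
  exact tendsto_const_nhds.div hlim (by positivity)
end

section
/- Let n ≥ 1, α > 1, and z : Fin n → ℝ. Then there exists a unique τ ∈ ℝ such that ∑ i, (max 0 ((α − 1) * z i − τ))^(1/(α − 1)) = 1. -/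
/-!
The sum `f τ = ∑ i, (max 0 (w i - τ)) ^ p`, with `w i = (α - 1) * z i` and `p = 1 / (α - 1) > 0`, is
continuous and nonincreasing in `τ`. If `w` is maximal at `j`, then `f (w j) = 0`, while the `j`-th
term alone gives `f (w j - 1) ≥ 1`, so the intermediate value theorem yields a root of `f = 1`.
The root is unique because `f` strictly decreases up to any point where it is nonzero: a nonzero sum
has a positive term, and that term is strictly larger at every smaller threshold.
-/

open Finset

/-- The sum is not strictly monotone on all of `ℝ`, as it vanishes for large thresholds;
nonvanishing at the larger threshold `b` is what gives the strict inequality. -/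
lemma sum_rpow_lt_of_lt {ι : Type*} [Fintype ι] {p : ℝ} (hp : 0 < p) (w : ι → ℝ) {a b : ℝ}
    (hab : a < b) (hb : ∑ i, (max 0 (w i - b)) ^ p ≠ 0) :
    ∑ i, (max 0 (w i - b)) ^ p < ∑ i, (max 0 (w i - a)) ^ p := by
  obtain ⟨i, -, hi⟩ := Finset.exists_ne_zero_of_sum_ne_zero hb
  have hpos : 0 < w i - b := by
    by_contra! h
    exact hi (by rw [max_eq_left h, Real.zero_rpow hp.ne'])
  refine Finset.sum_lt_sum (fun k _ => ?_) ⟨i, Finset.mem_univ i, ?_⟩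
  · exact Real.rpow_le_rpow (le_max_left _ _) (max_le_max le_rfl (by linarith)) hp.le
  · refine Real.rpow_lt_rpow (le_max_left _ _) ?_ hp
    rw [max_eq_right hpos.le, max_eq_right (by linarith)]
    linarith

/-- Existence and uniqueness of the `α`-entmax normalizing threshold `τ`. -/
theorem entmax_threshold_exists_unique (n : ℕ) (hn : 1 ≤ n) (α : ℝ) (hα : 1 < α)
    (z : Fin n → ℝ) :
    ∃! τ : ℝ, ∑ i, (max 0 ((α - 1) * z i - τ)) ^ (1 / (α - 1)) = 1 := by
  have hp : 0 < 1 / (α - 1) := one_div_pos.mpr (sub_pos.mpr hα)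
  generalize 1 / (α - 1) = p at hp ⊢
  obtain ⟨w, hw⟩ : ∃ w : Fin n → ℝ, ∀ i, (α - 1) * z i = w i := ⟨_, fun _ => rfl⟩
  simp only [hw]
  have : Nonempty (Fin n) := ⟨⟨0, hn⟩⟩
  obtain ⟨j, hj⟩ := Finite.exists_max w
  have hcont : Continuous fun τ : ℝ => ∑ i, (max 0 (w i - τ)) ^ p :=
    continuous_finsetSum _ fun i _ =>
      (continuous_const.max (continuous_const.sub continuous_id)).rpow_const
        fun _ => Or.inr hp.le
  have htop : ∑ i, (max 0 (w i - w j)) ^ p = 0 :=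
    Finset.sum_eq_zero fun i _ => by
      rw [max_eq_left (sub_nonpos.mpr (hj i)), Real.zero_rpow hp.ne']
  have hbot : 1 ≤ ∑ i, (max 0 (w i - (w j - 1))) ^ p := by
    have h := Finset.single_le_sum (f := fun i => (max 0 (w i - (w j - 1))) ^ p)
      (fun i _ => Real.rpow_nonneg (le_max_left _ _) p) (Finset.mem_univ j)
    simpa using h
  obtain ⟨τ, -, hτ⟩ := intermediate_value_Icc' (sub_le_self (w j) zero_le_one)
    hcont.continuousOn ⟨htop.le.trans zero_le_one, hbot⟩
  have hτ' : ∑ i, (max 0 (w i - τ)) ^ p = 1 := hτ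
  refine ⟨τ, hτ', fun σ hσ => ?_⟩
  have hσ' : ∑ i, (max 0 (w i - σ)) ^ p = 1 := hσ
  rcases lt_trichotomy σ τ with h | h | h
  · have := sum_rpow_lt_of_lt hp w h (by rw [hτ']; exact one_ne_zero)
    linarith
  · exact h
  · have := sum_rpow_lt_of_lt hp w h (by rw [hσ']; exact one_ne_zero)
    linarith
end

section
/- Let n ≥ 1, α > 1, z : Fin n → ℝ, and let τ be the unique real number with ∑ i, (max 0 ((α − 1) * z i − τ))^(1/(α − 1)) = 1. Define p* i = (max 0 ((α − 1) * z i − τ))^(1/(α − 1)). Then p* is a probability vector, and p* is the unique maximizer over all probability vectors p on Fin n of the objective ∑ i, z i * p i + H_α(p); i.e., α-entmax(z) = p*. -/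
/-!
Write `u i = (α - 1) * z i - τ`. On the simplex `∑ p i = 1`, so multiplying the objective by
`α * (α - 1)` and subtracting the constant `α * τ` (and the constant `∑ p i`) turns it into the
separable Lagrangian `∑ i, (α * u i * p i - p i ^ α)`. Each summand is strictly concave on
`[0, ∞)` and has `(max 0 (u i)) ^ (1 / (α - 1))` as its unique maximizer there
(`lagrangian_lt`), which follows from the strict tangent-line inequality for `x ↦ x ^ α`
(`tangent_lt_rpow`), i.e. from Bernoulli's inequality. Summing over `i` gives the theorem.
-/

open Finset

/-- The graph of `x ↦ x ^ α` lies strictly above its tangent at `q`, away from `q`; this is a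
rescaling of Bernoulli's inequality. -/
lemma tangent_lt_rpow {α x q : ℝ} (hα : 1 < α) (hx : 0 ≤ x) (hq : 0 ≤ q) (hxq : x ≠ q) :
    q ^ α + α * q ^ (α - 1) * (x - q) < x ^ α := by
  rcases hq.eq_or_lt with rfl | hq
  · have hx' : 0 < x := lt_of_le_of_ne hx hxq.symm
    rw [Real.zero_rpow (by linarith), Real.zero_rpow (by linarith)]
    simpa using Real.rpow_pos_of_pos hx' α
  · have hs : -1 ≤ x / q - 1 := by
      have : 0 ≤ x / q := by positivity
      linarith
    have hs0 : x / q - 1 ≠ 0 := by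
      intro h
      apply hxq
      field_simp at h
      linarith
    have hB := one_add_mul_self_lt_rpow_one_add hs hs0 hα
    rw [add_sub_cancel, Real.div_rpow hx hq.le, lt_div_iff₀ (Real.rpow_pos_of_pos hq α)] at hB
    have hqα : q ^ α = q ^ (α - 1) * q := by
      rw [← Real.rpow_add_one hq.ne', sub_add_cancel]
    calc q ^ α + α * q ^ (α - 1) * (x - q) = (1 + α * (x / q - 1)) * q ^ α := by
          rw [hqα]
          field_simp
      _ < x ^ α := hB

/-- The one-coordinate Lagrangian `x ↦ α * u * x - x ^ α` has
`(max 0 u) ^ (1 / (α - 1))` as its unique maximizer on `[0, ∞)`. -/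
lemma lagrangian_lt {α u x q : ℝ} (hα : 1 < α) (hx : 0 ≤ x)
    (hq : q = (max 0 u) ^ (1 / (α - 1))) (hxq : x ≠ q) :
    α * u * x - x ^ α < α * u * q - q ^ α := by
  have hm : 0 ≤ max 0 u := le_max_left _ _
  have hα1 : α - 1 ≠ 0 := by linarith
  have hq0 : 0 ≤ q := hq ▸ Real.rpow_nonneg hm _
  have hqm : q ^ (α - 1) = max 0 u := by
    rw [hq, ← Real.rpow_mul hm, one_div_mul_cancel hα1, Real.rpow_one]
  have ht := tangent_lt_rpow hα hx hq0 hxq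
  rw [hqm] at ht
  -- Complementary slackness: `u` and `max 0 u` differ only when `q = 0`.
  have hu : u * (x - q) ≤ max 0 u * (x - q) := by
    rcases le_total 0 u with h | h
    · rw [max_eq_right h]
    · have : q = 0 := by
        rw [hq, max_eq_left h, Real.zero_rpow (one_div_ne_zero hα1)]
      rw [max_eq_left h, this]
      nlinarith
  nlinarith

/-- The thresholded vector `p* i = (max 0 ((α-1) z i - τ))^(1/(α-1))` is a
probability vector and is the unique maximizer of `∑ z i * p i + H_α(p)` over
the probability simplex; i.e. `α-entmax(z) = p*`. -/
theorem entmax_eq_threshold_form (n : ℕ) (hn : 1 ≤ n) (α : ℝ) (hα : 1 < α)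
    (z : Fin n → ℝ) (τ : ℝ)
    (hτ : ∑ i, (max 0 ((α - 1) * z i - τ)) ^ (1 / (α - 1)) = 1)
    (pstar : Fin n → ℝ)
    (hpstar : ∀ i, pstar i = (max 0 ((α - 1) * z i - τ)) ^ (1 / (α - 1))) :
    ((∀ i, 0 ≤ pstar i) ∧ ∑ i, pstar i = 1) ∧
    ∀ p : Fin n → ℝ, (∀ i, 0 ≤ p i) → ∑ i, p i = 1 →
      (∑ i, z i * p i + (1 / (α * (α - 1))) * ∑ i, (p i - (p i) ^ α) ≤
        ∑ i, z i * pstar i + (1 / (α * (α - 1))) * ∑ i, (pstar i - (pstar i) ^ α)) ∧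
      (∑ i, z i * p i + (1 / (α * (α - 1))) * ∑ i, (p i - (p i) ^ α) =
        ∑ i, z i * pstar i + (1 / (α * (α - 1))) * ∑ i, (pstar i - (pstar i) ^ α) ↔
        p = pstar) := by
  have hq0 : ∀ i, 0 ≤ pstar i := fun i => by
    rw [hpstar i]
    exact Real.rpow_nonneg (le_max_left _ _) _
  have hq1 : ∑ i, pstar i = 1 := by
    rw [← hτ]
    exact sum_congr rfl fun i _ => hpstar i
  refine ⟨⟨hq0, hq1⟩, fun p hp0 hp1 => ?_⟩
  have hα0 : α ≠ 0 := by linarith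
  have hα1 : α - 1 ≠ 0 := by linarith
  have hc : 0 < 1 / (α * (α - 1)) := by
    have : 0 < α - 1 := by linarith
    positivity
  -- On the simplex the objective is an increasing affine function of the Lagrangian.
  have key : ∀ r : Fin n → ℝ, ∑ i, r i = 1 →
      ∑ i, z i * r i + (1 / (α * (α - 1))) * ∑ i, (r i - (r i) ^ α) =
        (1 / (α * (α - 1))) *
          (∑ i, (α * ((α - 1) * z i - τ) * r i - (r i) ^ α) + (α * τ + 1)) := by
    intro r hr
    have h : ∑ i, (α * ((α - 1) * z i - τ) * r i - (r i) ^ α) =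
        α * (α - 1) * ∑ i, z i * r i - α * τ * ∑ i, r i - ∑ i, (r i) ^ α := by
      rw [mul_sum, mul_sum, ← sum_sub_distrib, ← sum_sub_distrib]
      exact sum_congr rfl fun i _ => by ring
    rw [h, sum_sub_distrib, hr]
    field_simp
    ring
  rw [key p hp1, key pstar hq1]
  have hle : ∀ i ∈ univ, α * ((α - 1) * z i - τ) * p i - (p i) ^ α ≤
      α * ((α - 1) * z i - τ) * pstar i - (pstar i) ^ α := by
    intro i _
    by_cases h : p i = pstar i
    · rw [h]
    · exact (lagrangian_lt hα (hp0 i) (hpstar i) h).le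
  refine ⟨?_, fun h => ?_, fun h => by rw [h]⟩
  · have := sum_le_sum hle
    gcongr
  · have hsum := add_right_cancel (mul_left_cancel₀ hc.ne' h)
    funext i
    by_contra hi
    exact (lagrangian_lt hα (hp0 i) (hpstar i) hi).ne
      ((sum_eq_sum_iff_of_le hle).1 hsum i (mem_univ i))
end

section
/- Let n ≥ 1 and z : Fin n → ℝ. Then there exists a unique τ ∈ ℝ such that ∑ i, max 0 (z i − τ) = 1, and the vector p* with p* i = max 0 (z i − τ) is the unique minimizer of ∑ i, (p i − z i)^2 over all probability vectors p on Fin n; i.e., sparsemax(z) = p* is the Euclidean projection of z onto the probability simplex. -/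
/-!
The map `τ ↦ ∑ i, max 0 (z i - τ)` is continuous, vanishes at `τ = max z`, is at least `1` at
`τ = max z - 1`, and is strictly decreasing wherever it is positive; so it takes the value `1`
exactly once. With `q i = max 0 (z i - τ)`, complementary slackness gives
`(p i - q i) * (q i - z i + τ) ≥ 0` for `p i ≥ 0`. Summing over `i`, the multiplier term
`τ * ∑ i, (p i - q i)` vanishes and `‖p - z‖² ≥ ‖q - z‖² + ‖p - q‖²` (`sq_dist_ge`), which gives
both minimality and uniqueness.
-/

open Finset

theorem exists_threshold (n : ℕ) (hn : 1 ≤ n) (z : Fin n → ℝ) :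
    ∃ τ : ℝ, ∑ i, max 0 (z i - τ) = 1 := by
  have : Nonempty (Fin n) := ⟨⟨0, hn⟩⟩
  obtain ⟨m, hm⟩ := Finite.exists_max z
  have hc : Continuous fun τ : ℝ => ∑ i, max 0 (z i - τ) := by fun_prop
  have h0 : ∑ i, max 0 (z i - z m) = 0 :=
    Finset.sum_eq_zero fun i _ => max_eq_left (by linarith [hm i])
  have h1 : 1 ≤ ∑ i, max 0 (z i - (z m - 1)) := by
    have h := Finset.single_le_sum (f := fun i => max 0 (z i - (z m - 1)))
      (fun i _ => le_max_left _ _) (Finset.mem_univ m)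
    have h' := le_max_right 0 (z m - (z m - 1))
    linarith
  obtain ⟨τ, hτ⟩ := mem_range_of_exists_le_of_exists_ge hc
    ⟨z m, by rw [h0]; exact zero_le_one⟩ ⟨z m - 1, h1⟩
  exact ⟨τ, hτ⟩

theorem threshold_le {n : ℕ} {z : Fin n → ℝ} {σ τ : ℝ}
    (hσ : ∑ i, max 0 (z i - σ) = 1) (hτ : ∑ i, max 0 (z i - τ) = 1) : τ ≤ σ := by
  by_contra! hlt
  -- Some term of the sum at `τ` is positive, and it strictly grows when `τ` is lowered to `σ`.
  obtain ⟨j, -, hj⟩ : ∃ j ∈ Finset.univ, 0 < max 0 (z j - τ) :=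
    Finset.exists_lt_of_sum_lt (by simp [hτ])
  have hj' : 0 < z j - τ := by simpa using hj
  have : ∑ i, max 0 (z i - τ) < ∑ i, max 0 (z i - σ) := by
    refine Finset.sum_lt_sum (fun i _ => max_le_max le_rfl (by linarith))
      ⟨j, Finset.mem_univ j, ?_⟩
    rw [max_eq_right hj'.le]
    exact lt_max_of_lt_right (by linarith)
  linarith

theorem sq_dist_ge {n : ℕ} {z : Fin n → ℝ} {τ : ℝ} (hτ : ∑ i, max 0 (z i - τ) = 1)
    {p : Fin n → ℝ} (hp : ∀ i, 0 ≤ p i) (hp1 : ∑ i, p i = 1) :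
    ∑ i, (max 0 (z i - τ) - z i) ^ 2 + ∑ i, (p i - max 0 (z i - τ)) ^ 2
      ≤ ∑ i, (p i - z i) ^ 2 := by
  have key : ∑ i, ((max 0 (z i - τ) - z i) ^ 2 + (p i - max 0 (z i - τ)) ^ 2
      - 2 * τ * (p i - max 0 (z i - τ))) ≤ ∑ i, (p i - z i) ^ 2 := by
    refine Finset.sum_le_sum fun i _ => ?_
    have slack : 0 ≤ (p i - max 0 (z i - τ)) * (max 0 (z i - τ) - z i + τ) := by
      rcases le_total (z i - τ) 0 with h | h
      · rw [max_eq_left h]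
        exact mul_nonneg (by linarith [hp i]) (by linarith)
      · rw [max_eq_right h]
        exact le_of_eq (by ring)
    linarith
  rw [Finset.sum_sub_distrib, Finset.sum_add_distrib, ← Finset.mul_sum,
    Finset.sum_sub_distrib, hp1, hτ] at key
  linarith

/-- Sparsemax: there is a unique threshold `τ` with `∑ i, max 0 (z i - τ) = 1`,
and `p* i = max 0 (z i - τ)` is the unique Euclidean projection of `z` onto the
probability simplex. -/
theorem sparsemax_is_projection (n : ℕ) (hn : 1 ≤ n) (z : Fin n → ℝ) :
    (∃! τ : ℝ, ∑ i, max 0 (z i - τ) = 1) ∧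
    ∀ τ : ℝ, (∑ i, max 0 (z i - τ) = 1) →
      ((∀ i, 0 ≤ max 0 (z i - τ)) ∧ ∑ i, max 0 (z i - τ) = 1) ∧
      ∀ p : Fin n → ℝ, (∀ i, 0 ≤ p i) → ∑ i, p i = 1 →
        (∑ i, (max 0 (z i - τ) - z i) ^ 2 ≤ ∑ i, (p i - z i) ^ 2) ∧
        (∑ i, (p i - z i) ^ 2 = ∑ i, (max 0 (z i - τ) - z i) ^ 2 ↔
          p = fun i => max 0 (z i - τ)) := by
  refine ⟨?_, fun τ hτ => ⟨⟨fun i => le_max_left _ _, hτ⟩, fun p hp hp1 => ?_⟩⟩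
  · obtain ⟨τ, hτ⟩ := exists_threshold n hn z
    exact ⟨τ, hτ, fun σ hσ => le_antisymm (threshold_le hτ hσ) (threshold_le hσ hτ)⟩
  · have key := sq_dist_ge hτ hp hp1
    have hnn : 0 ≤ ∑ i, (p i - max 0 (z i - τ)) ^ 2 :=
      Finset.sum_nonneg fun i _ => sq_nonneg _
    refine ⟨by linarith, fun h => ?_, fun h => by rw [h]⟩
    have hz : ∑ i, (p i - max 0 (z i - τ)) ^ 2 = 0 := by linarith
    rw [Finset.sum_eq_zero_iff_of_nonneg fun i _ => sq_nonneg _] at hz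
    funext i
    exact sub_eq_zero.mp (pow_eq_zero_iff two_ne_zero |>.mp (hz i (Finset.mem_univ i)))
end

section
/- Let n ≥ 1, let g be a probability vector on Fin n with support S = {i | g i ≠ 0}, and let z : Fin n → ℝ. Define p* i = (g i * Real.exp (z i)) / (∑ t, g t * Real.exp (z t)). Then p* is a probability vector with support exactly S, and for every probability vector p on Fin n with supp(p) ⊆ S, ∑ i, z i * p i − KL(p ‖ g) ≤ ∑ i, z i * p* i − KL(p* ‖ g), with equality if and only if p = p*. In other words, p* is the unique maximizer over {p ∈ Δ_n : supp(p) ⊆ supp(g)} of ∑ i, z i * p i − KL(p ‖ g). -/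
/-!
Write `Z = ∑ t, g t * exp (z t)`. On the support of `p`,
`log (p i / g i) = log (p i / p* i) + z i - log Z`, so for every admissible `p` the objective equals `log Z - KL(p ‖ p*)` (`objective_eq`). Gibbs'
inequality (`gibbs_nonneg`, with equality case `gibbs_eq`), which follows termwise from
`log x ≤ x - 1`, then gives both the maximality of `p*` and its uniqueness.
-/

open Finset

/-- Applied with `a = p i`, `b = q i`: the summand of `KL(p ‖ q)` dominates `p i - q i`, and these
lower bounds sum to zero when `p` and `q` are probability vectors. -/
lemma sub_le_mul_log_div {a b : ℝ} (ha : 0 ≤ a) (hb : 0 ≤ b) (h : a ≠ 0 → b ≠ 0) :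
    a - b ≤ a * Real.log (a / b) := by
  rcases eq_or_ne a 0 with rfl | ha0
  · simpa using hb
  · have hap : 0 < a := lt_of_le_of_ne ha ha0.symm
    have hbp : 0 < b := lt_of_le_of_ne hb (h ha0).symm
    have h1 := Real.log_le_sub_one_of_pos (div_pos hbp hap)
    rw [← inv_div, Real.log_inv]
    have h2 : a * (b / a) = b := by field_simp
    nlinarith [mul_le_mul_of_nonneg_left h1 hap.le]

lemma eq_of_sub_eq_mul_log_div {a b : ℝ} (ha : 0 ≤ a) (hb : 0 ≤ b) (h : a ≠ 0 → b ≠ 0)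
    (he : a - b = a * Real.log (a / b)) : a = b := by
  rcases eq_or_ne a 0 with rfl | ha0
  · simp at he
    exact he.symm
  · have hap : 0 < a := lt_of_le_of_ne ha ha0.symm
    have hbp : 0 < b := lt_of_le_of_ne hb (h ha0).symm
    by_contra hne
    have hne1 : b / a ≠ 1 := fun hh => hne ((div_eq_one_iff_eq ha0).1 hh).symm
    have h1 := Real.log_lt_sub_one_of_pos (div_pos hbp hap) hne1
    rw [← inv_div, Real.log_inv] at he
    have h2 : a * (b / a) = b := by field_simp
    nlinarith [mul_lt_mul_of_pos_left h1 hap]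

lemma gibbs_nonneg {n : ℕ} {p q : Fin n → ℝ} (hp : ∀ i, 0 ≤ p i) (hq : ∀ i, 0 ≤ q i)
    (hp1 : ∑ i, p i = 1) (hq1 : ∑ i, q i = 1) (h : ∀ i, p i ≠ 0 → q i ≠ 0) :
    0 ≤ ∑ i, p i * Real.log (p i / q i) := by
  calc (0 : ℝ) = ∑ i, (p i - q i) := by rw [sum_sub_distrib, hp1, hq1, sub_self]
    _ ≤ _ := sum_le_sum fun i _ => sub_le_mul_log_div (hp i) (hq i) (h i)

lemma gibbs_eq {n : ℕ} {p q : Fin n → ℝ} (hp : ∀ i, 0 ≤ p i) (hq : ∀ i, 0 ≤ q i)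
    (hp1 : ∑ i, p i = 1) (hq1 : ∑ i, q i = 1) (h : ∀ i, p i ≠ 0 → q i ≠ 0)
    (he : ∑ i, p i * Real.log (p i / q i) = 0) : p = q := by
  have hs : ∑ i, (p i - q i) = ∑ i, p i * Real.log (p i / q i) := by
    rw [sum_sub_distrib, hp1, hq1, sub_self, he]
  -- A sum of termwise inequalities is an equality only if every term is.
  have ht := (sum_eq_sum_iff_of_le
    fun i _ => sub_le_mul_log_div (hp i) (hq i) (h i)).1 hs
  funext i
  exact eq_of_sub_eq_mul_log_div (hp i) (hq i) (h i) (ht i (mem_univ i))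

/-- With `q i = g i * exp (z i) / Z`, the objective at `p` is `log Z - KL(p ‖ q)`. The last sum runs
over all indices: terms outside the support of `p` vanish. -/
lemma objective_eq {n : ℕ} {g z p q : Fin n → ℝ} {Z : ℝ} (hZ : 0 < Z)
    (hq : ∀ i, q i = g i * Real.exp (z i) / Z) (hp1 : ∑ i, p i = 1)
    (h : ∀ i, p i ≠ 0 → g i ≠ 0) :
    ∑ i, z i * p i - ∑ i ∈ univ.filter (fun i => p i ≠ 0), p i * Real.log (p i / g i) =
      Real.log Z - ∑ i, p i * Real.log (p i / q i) := by
  rw [sum_filter_of_ne (fun i _ hi => left_ne_zero_of_mul hi)]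
  have hlog : Real.log Z = ∑ i, p i * Real.log Z := by rw [← sum_mul, hp1, one_mul]
  rw [hlog, ← sum_sub_distrib, ← sum_sub_distrib]
  refine sum_congr rfl fun i _ => ?_
  rcases eq_or_ne (p i) 0 with h0 | h0
  · simp [h0]
  · have hgi := h i h0
    have hexp := (Real.exp_pos (z i)).ne'
    rw [hq i, Real.log_div h0 hgi,
      Real.log_div h0 (div_ne_zero (mul_ne_zero hgi hexp) hZ.ne'),
      Real.log_div (mul_ne_zero hgi hexp) hZ.ne', Real.log_mul hgi hexp, Real.log_exp]
    ring

/-- Prior-induced softmax `p* i = g i * exp (z i) / ∑ t, g t * exp (z t)` is a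
probability vector with support exactly `supp g`, and it is the unique maximizer
of `∑ z i * p i - KL(p ‖ g)` over probability vectors with `supp p ⊆ supp g`. -/
theorem prior_softmax_variational (n : ℕ) (hn : 1 ≤ n)
    (g : Fin n → ℝ) (hg0 : ∀ i, 0 ≤ g i) (hg1 : ∑ i, g i = 1)
    (z : Fin n → ℝ)
    (pstar : Fin n → ℝ)
    (hpstar : ∀ i, pstar i = g i * Real.exp (z i) / ∑ t, g t * Real.exp (z t)) :
    ((∀ i, 0 ≤ pstar i) ∧ ∑ i, pstar i = 1) ∧
    ({i | pstar i ≠ 0} = {i | g i ≠ 0}) ∧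
    ∀ p : Fin n → ℝ, (∀ i, 0 ≤ p i) → ∑ i, p i = 1 →
      (∀ i, p i ≠ 0 → g i ≠ 0) →
      ((∑ i, z i * p i -
          ∑ i ∈ Finset.univ.filter (fun i => p i ≠ 0), p i * Real.log (p i / g i)) ≤
        (∑ i, z i * pstar i -
          ∑ i ∈ Finset.univ.filter (fun i => pstar i ≠ 0), pstar i * Real.log (pstar i / g i))) ∧
      ((∑ i, z i * p i -
          ∑ i ∈ Finset.univ.filter (fun i => p i ≠ 0), p i * Real.log (p i / g i)) =
        (∑ i, z i * pstar i -
          ∑ i ∈ Finset.univ.filter (fun i => pstar i ≠ 0), pstar i * Real.log (pstar i / g i)) ↔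
        p = pstar) := by
  have hZ : 0 < ∑ t, g t * Real.exp (z t) := by
    have hne : ∑ i, g i ≠ 0 := by rw [hg1]; exact one_ne_zero
    obtain ⟨i, hi, hgi⟩ := exists_ne_zero_of_sum_ne_zero hne
    exact sum_pos' (fun t _ => mul_nonneg (hg0 t) (Real.exp_pos _).le)
      ⟨i, hi, mul_pos (lt_of_le_of_ne (hg0 i) hgi.symm) (Real.exp_pos _)⟩
  have hs0 : ∀ i, 0 ≤ pstar i := fun i => by
    rw [hpstar i]
    exact div_nonneg (mul_nonneg (hg0 i) (Real.exp_pos _).le) hZ.le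
  have hs1 : ∑ i, pstar i = 1 := by
    simp_rw [hpstar]
    rw [← sum_div, div_self hZ.ne']
  have hsupp : ∀ i, pstar i ≠ 0 ↔ g i ≠ 0 := fun i => by
    rw [hpstar i]
    simp [hZ.ne', Real.exp_ne_zero]
  refine ⟨⟨hs0, hs1⟩, Set.ext hsupp, fun p hp0 hp1 hpg => ?_⟩
  have hps : ∀ i, p i ≠ 0 → pstar i ≠ 0 := fun i hi => (hsupp i).2 (hpg i hi)
  have hself : ∑ i, pstar i * Real.log (pstar i / pstar i) = 0 :=
    sum_eq_zero fun i _ => by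
      rcases eq_or_ne (pstar i) 0 with h0 | h0
      · simp [h0]
      · simp [div_self h0]
  rw [objective_eq hZ hpstar hp1 hpg, objective_eq hZ hpstar hs1 fun i => (hsupp i).1, hself]
  refine ⟨by linarith [gibbs_nonneg hp0 hs0 hp1 hs1 hps], fun he => ?_, fun he => ?_⟩
  · exact gibbs_eq hp0 hs0 hp1 hs1 hps (by linarith)
  · rw [he, hself]
end
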